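/- arXiv:2310.02134 — 3 statements merged into one kernel-verified Lean document; each statement's English description precedes it below -/
import Mathlib

section
/- Let α ∈ (0,2), δ ∈ (0,1], h ∈ (0,1), and assume M_δ := sup_{k∈Λ} ∫_{ℝ^d} |z|^δ dμ_k(z) < ∞. Let w : ℝ × ℝ^d → ℝ be a bounded twice continuously differentiable function such that ∂_t w, ∂_t² w and the spatial gradient ∇_x ∂_t w are bounded. Then for every t ∈ ℝ and x ∈ ℝ^d, | ∂_t w(t,x) · h + sup_{k∈Λ} ∫_{ℝ^d} w(t−h, x + h^{1/α} z) dμ_k(z) − sup_{k∈Λ} ∫_{ℝ^d} w(t, x + h^{1/α} z) dμ_k(z) | ≤ (1/2) ‖∂_t² w‖_∞ h² + ‖∇_x ∂_t w‖_∞^δ (2‖∂_t w‖_∞)^{1−δ} M_δ h^{1 + δ/α}. -/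
open MeasureTheory Set

/-!
With `y = x + r • z`, split `∂ₜw(t,x) h + w(t-h,y) - w(t,y)` into the Taylor remainder of
`s ↦ w(s,y)` at `t`, of size `½ ‖∂ₜ²w‖ h²`, and `h (∂ₜw(t,x) - ∂ₜw(t,y))`. The last difference is at
most `‖∇ₓ∂ₜw‖ ‖y-x‖` and at most `2 ‖∂ₜw‖`; interpolating geometrically between the two bounds makes
`‖z‖ ^ δ` the only moment needed. Integrating against each measure gives a bound uniform in the
measure, which therefore survives the suprema.
-/

lemma norm_sub_sub_smul_deriv_le {F : Type*} [NormedAddCommGroup F] [NormedSpace ℝ F]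
    {f : ℝ → F} (hf : Differentiable ℝ f) (hf' : Differentiable ℝ (deriv f)) {A : ℝ}
    (hA : ∀ s, ‖deriv (deriv f) s‖ ≤ A) (a b : ℝ) :
    ‖f b - f a - (b - a) • deriv f a‖ ≤ 1 / 2 * A * (b - a) ^ 2 := by
  have deriv_lipschitz (c : ℝ) : ‖deriv f c - deriv f a‖ ≤ A * ‖c - a‖ :=
    convex_univ.norm_image_sub_le_of_norm_deriv_le (fun s _ ↦ hf' s) (fun s _ ↦ hA s)
      (mem_univ a) (mem_univ c)
  let path (s : ℝ) : ℝ := a + s * (b - a)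
  let remainder (s : ℝ) : F := f (path s) - f a - s • (b - a) • deriv f a
  have hasDerivAt_remainder (s : ℝ) :
      HasDerivAt remainder ((b - a) • (deriv f (path s) - deriv f a)) s := by
    have hpath : HasDerivAt path (b - a) s :=
      (hasDerivAt_mul_const (b - a)).const_add a
    have hlinear : HasDerivAt (fun s : ℝ ↦ s • (b - a) • deriv f a) ((b - a) • deriv f a) s := by
      simpa using (hasDerivAt_id s).smul_const ((b - a) • deriv f a)
    rw [smul_sub]
    exact (((hf (path s)).hasDerivAt.scomp s hpath).sub_const (f a)).sub hlinear
  have hasDerivAt_bound (s : ℝ) :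
      HasDerivAt (fun s : ℝ ↦ 1 / 2 * A * (b - a) ^ 2 * s ^ 2) (A * (b - a) ^ 2 * s) s :=
    ((hasDerivAt_pow 2 s).const_mul _).congr_deriv (by push_cast; ring)
  have norm_deriv_le (s : ℝ) (hs : 0 ≤ s) :
      ‖(b - a) • (deriv f (path s) - deriv f a)‖ ≤ A * (b - a) ^ 2 * s :=
    calc ‖(b - a) • (deriv f (path s) - deriv f a)‖
      _ = |b - a| * ‖deriv f (path s) - deriv f a‖ := norm_smul _ _
      _ ≤ |b - a| * (A * ‖path s - a‖) := by gcongr; exact deriv_lipschitz _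
      _ = A * |b - a| ^ 2 * s := by
        rw [add_sub_cancel_left, norm_mul, Real.norm_of_nonneg hs, Real.norm_eq_abs]; ring
      _ = A * (b - a) ^ 2 * s := by rw [sq_abs]
  have norm_remainder_le : ‖remainder 1‖ ≤ 1 / 2 * A * (b - a) ^ 2 * 1 ^ 2 :=
    image_norm_le_of_norm_deriv_right_le_deriv_boundary
      (fun s _ ↦ (hasDerivAt_remainder s).continuousAt.continuousWithinAt)
      (fun s _ ↦ (hasDerivAt_remainder s).hasDerivWithinAt) (by simp [remainder, path])
      hasDerivAt_bound (fun s hs ↦ norm_deriv_le s hs.1) (right_mem_Icc.2 zero_le_one)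
  simpa [remainder, path] using norm_remainder_le

lemma le_rpow_mul_rpow_one_sub {a b c δ : ℝ} (ha : 0 ≤ a) (hδ : δ ∈ Icc (0 : ℝ) 1)
    (hab : a ≤ b) (hac : a ≤ c) : a ≤ b ^ δ * c ^ (1 - δ) := by
  have hδ₀ : 0 ≤ δ := hδ.1
  have hδ₁ : 0 ≤ 1 - δ := sub_nonneg.2 hδ.2
  have hb : 0 ≤ b := ha.trans hab
  calc a = a ^ δ * a ^ (1 - δ) := by
        rw [← Real.rpow_add_of_nonneg ha hδ₀ hδ₁, add_sub_cancel, Real.rpow_one]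
    _ ≤ b ^ δ * c ^ (1 - δ) := by gcongr

lemma norm_sub_le_rpow_of_norm_le_of_norm_fderiv_le {E F : Type*}
    [NormedAddCommGroup E] [NormedSpace ℝ E] [NormedAddCommGroup F] [NormedSpace ℝ F]
    {f : E → F} (hf : Differentiable ℝ f) {B G δ : ℝ} (hδ : δ ∈ Icc (0 : ℝ) 1)
    (hB : ∀ x, ‖f x‖ ≤ B) (hG : ∀ x, ‖fderiv ℝ f x‖ ≤ G) (x y : E) :
    ‖f y - f x‖ ≤ G ^ δ * (2 * B) ^ (1 - δ) * ‖y - x‖ ^ δ := by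
  have lipschitz_bound : ‖f y - f x‖ ≤ G * ‖y - x‖ :=
    convex_univ.norm_image_sub_le_of_norm_fderiv_le (fun z _ ↦ hf z) (fun z _ ↦ hG z)
      (mem_univ x) (mem_univ y)
  have uniform_bound : ‖f y - f x‖ ≤ 2 * B := by
    linarith [norm_sub_le (f y) (f x), hB x, hB y]
  have hG₀ : 0 ≤ G := (norm_nonneg _).trans (hG x)
  calc ‖f y - f x‖ ≤ (G * ‖y - x‖) ^ δ * (2 * B) ^ (1 - δ) :=
        le_rpow_mul_rpow_one_sub (norm_nonneg _) hδ lipschitz_bound uniform_bound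
    _ = G ^ δ * (2 * B) ^ (1 - δ) * ‖y - x‖ ^ δ := by
        rw [Real.mul_rpow hG₀ (norm_nonneg _)]; ring

lemma mul_rpow_one_div_rpow {h : ℝ} (hh : 0 < h) (α δ : ℝ) :
    h * (h ^ (1 / α)) ^ δ = h ^ (1 + δ / α) := by
  rw [← Real.rpow_mul hh.le, one_div_mul_eq_div, Real.rpow_add hh, Real.rpow_one]

lemma le_ciSup_prod {ι κ : Type*} {f : ι → κ → ℝ} (hf : ∃ M, ∀ i j, f i j ≤ M) (i : ι) (j : κ) :
    f i j ≤ ⨆ q : ι × κ, f q.1 q.2 := by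
  obtain ⟨M, hM⟩ := hf
  exact le_ciSup (f := fun q : ι × κ ↦ f q.1 q.2) ⟨M, forall_mem_range.2 fun q ↦ hM q.1 q.2⟩ (i, j)

lemma abs_add_ciSup_sub_ciSup_le {ι : Type*} [Nonempty ι] {u v : ι → ℝ}
    (hu : BddAbove (range u)) (hv : BddAbove (range v)) {a C : ℝ}
    (h : ∀ k, |a + u k - v k| ≤ C) : |a + (⨆ k, u k) - ⨆ k, v k| ≤ C := by
  have iSup_u_le : ⨆ k, u k ≤ C - a + ⨆ k, v k :=
    ciSup_le fun k ↦ by linarith [le_ciSup hv k, (abs_le.1 (h k)).2]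
  have iSup_v_le : ⨆ k, v k ≤ C + a + ⨆ k, u k :=
    ciSup_le fun k ↦ by linarith [le_ciSup hu k, (abs_le.1 (h k)).1]
  exact abs_le.2 ⟨by linarith, by linarith⟩

section UpperExpectation

variable {Ω Λ : Type*} [MeasurableSpace Ω] {μ : Λ → Measure Ω} [∀ k, IsProbabilityMeasure (μ k)]

lemma bddAbove_range_integral_of_abs_le {f : Ω → ℝ} {M : ℝ} (hf : ∀ z, |f z| ≤ M) :
    BddAbove (range fun k ↦ ∫ z, f z ∂μ k) := by
  refine ⟨M, forall_mem_range.2 fun k ↦ (le_abs_self _).trans ?_⟩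
  simpa using norm_integral_le_of_norm_le_const (f := f) (μ := μ k) (.of_forall hf)

lemma abs_add_iSup_integral_sub_iSup_integral_le [Nonempty Λ] {f g φ : Ω → ℝ} {c C M : ℝ}
    (hf : Measurable f) (hg : Measurable g) (hfM : ∀ z, |f z| ≤ M) (hgM : ∀ z, |g z| ≤ M)
    (hφ : ∀ k, Integrable φ (μ k)) (hφC : ∀ k, ∫ z, φ z ∂μ k ≤ C)
    (hfgφ : ∀ z, |c + f z - g z| ≤ φ z) :
    |c + (⨆ k, ∫ z, f z ∂μ k) - ⨆ k, ∫ z, g z ∂μ k| ≤ C := by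
  refine abs_add_ciSup_sub_ciSup_le (bddAbove_range_integral_of_abs_le hfM)
    (bddAbove_range_integral_of_abs_le hgM) fun k ↦ ?_
  have hf_int : Integrable f (μ k) := .of_bound hf.aestronglyMeasurable M (.of_forall hfM)
  have hg_int : Integrable g (μ k) := .of_bound hg.aestronglyMeasurable M (.of_forall hgM)
  calc |c + ∫ z, f z ∂μ k - ∫ z, g z ∂μ k| = |∫ z, (c + f z - g z) ∂μ k| := by
        rw [integral_sub (by fun_prop) hg_int, integral_add (by fun_prop) hf_int, integral_const,
          probReal_univ, one_smul]
    _ ≤ ∫ z, φ z ∂μ k :=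
        norm_integral_le_of_norm_le (f := fun z ↦ c + f z - g z) (hφ k) (.of_forall hfgφ)
    _ ≤ C := hφC k

end UpperExpectation

lemma contDiff_deriv_fst {𝕜 E F : Type*} [NontriviallyNormedField 𝕜]
    [NormedAddCommGroup E] [NormedSpace 𝕜 E] [NormedAddCommGroup F] [NormedSpace 𝕜 F]
    {w : 𝕜 → E → F} {m n : WithTop ℕ∞} (hw : ContDiff 𝕜 n fun q : 𝕜 × E ↦ w q.1 q.2)
    (hmn : m + 1 ≤ n) : ContDiff 𝕜 m fun q : 𝕜 × E ↦ deriv (fun s ↦ w s q.2) q.1 := by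
  have hw_param : ContDiff 𝕜 n (Function.uncurry fun (q : 𝕜 × E) (s : 𝕜) ↦ w s q.2) :=
    hw.comp₂ contDiff_snd (contDiff_snd.comp contDiff_fst)
  exact (hw_param.fderiv contDiff_fst hmn).clm_apply contDiff_const

section Consistency

variable {E : Type*} [NormedAddCommGroup E] [NormedSpace ℝ E] {w : ℝ → E → ℝ} {δ h : ℝ}

lemma abs_deriv_mul_add_sub_le (hδ : δ ∈ Icc (0 : ℝ) 1) (hh : 0 ≤ h)
    (hwt : ∀ x, Differentiable ℝ fun s ↦ w s x)
    (hwtt : ∀ x, Differentiable ℝ (deriv fun s ↦ w s x))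
    (hwtx : ∀ t, Differentiable ℝ fun y ↦ deriv (fun s ↦ w s y) t) {A B G : ℝ}
    (hA : ∀ t x, |deriv (deriv fun s ↦ w s x) t| ≤ A)
    (hB : ∀ t x, |deriv (fun s ↦ w s x) t| ≤ B)
    (hG : ∀ t x, ‖fderiv ℝ (fun y ↦ deriv (fun s ↦ w s y) t) x‖ ≤ G) (t : ℝ) (x y : E) :
    |deriv (fun s ↦ w s x) t * h + w (t - h) y - w t y| ≤
      1 / 2 * A * h ^ 2 + G ^ δ * (2 * B) ^ (1 - δ) * (h * ‖y - x‖ ^ δ) := by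
  have taylor : |w (t - h) y - w t y + h * deriv (fun s ↦ w s y) t| ≤ 1 / 2 * A * h ^ 2 := by
    simpa using norm_sub_sub_smul_deriv_le (hwt y) (hwtt y) (hA · y) t (t - h)
  have holder : |deriv (fun s ↦ w s y) t - deriv (fun s ↦ w s x) t| ≤
      G ^ δ * (2 * B) ^ (1 - δ) * ‖y - x‖ ^ δ :=
    norm_sub_le_rpow_of_norm_le_of_norm_fderiv_le (hwtx t) hδ (hB t) (hG t) x y
  calc |deriv (fun s ↦ w s x) t * h + w (t - h) y - w t y|
    _ = |(w (t - h) y - w t y + h * deriv (fun s ↦ w s y) t)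
          - h * (deriv (fun s ↦ w s y) t - deriv (fun s ↦ w s x) t)| := by congr 1; ring
    _ ≤ |w (t - h) y - w t y + h * deriv (fun s ↦ w s y) t|
          + |h * (deriv (fun s ↦ w s y) t - deriv (fun s ↦ w s x) t)| := abs_sub _ _
    _ = |w (t - h) y - w t y + h * deriv (fun s ↦ w s y) t|
          + h * |deriv (fun s ↦ w s y) t - deriv (fun s ↦ w s x) t| := by
        rw [abs_mul, abs_of_nonneg hh]
    _ ≤ 1 / 2 * A * h ^ 2 + h * (G ^ δ * (2 * B) ^ (1 - δ) * ‖y - x‖ ^ δ) := by gcongr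
    _ = 1 / 2 * A * h ^ 2 + G ^ δ * (2 * B) ^ (1 - δ) * (h * ‖y - x‖ ^ δ) := by ring

theorem stmt_5_general [MeasurableSpace E] [BorelSpace E] {Λ : Type*} [Nonempty Λ]
    {μ : Λ → Measure E} (hμ : ∀ k, IsProbabilityMeasure (μ k))
    (hδ : δ ∈ Icc (0 : ℝ) 1) (hh : 0 ≤ h) {r : ℝ} (hr : 0 ≤ r) {Mδ : ℝ}
    (hMδint : ∀ k, Integrable (fun z ↦ ‖z‖ ^ δ) (μ k)) (hMδ : ∀ k, ∫ z, ‖z‖ ^ δ ∂μ k ≤ Mδ)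
    (hwm : ∀ t, Measurable (w t)) (hwt : ∀ x, Differentiable ℝ fun s ↦ w s x)
    (hwtt : ∀ x, Differentiable ℝ (deriv fun s ↦ w s x))
    (hwtx : ∀ t, Differentiable ℝ fun y ↦ deriv (fun s ↦ w s y) t)
    (hwb : ∃ M, ∀ t x, |w t x| ≤ M)
    (hdtb : ∃ M, ∀ t x, |deriv (fun s ↦ w s x) t| ≤ M)
    (hdttb : ∃ M, ∀ t x, |deriv (deriv fun s ↦ w s x) t| ≤ M)
    (hgradtb : ∃ M, ∀ t x, ‖fderiv ℝ (fun y ↦ deriv (fun s ↦ w s y) t) x‖ ≤ M) (t : ℝ) (x : E) :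
    |deriv (fun s ↦ w s x) t * h
        + (⨆ k, ∫ z, w (t - h) (x + r • z) ∂μ k) - ⨆ k, ∫ z, w t (x + r • z) ∂μ k| ≤
      1 / 2 * (⨆ q : ℝ × E, |deriv (deriv fun s ↦ w s q.2) q.1|) * h ^ 2
      + (⨆ q : ℝ × E, ‖fderiv ℝ (fun y ↦ deriv (fun s ↦ w s y) q.1) q.2‖) ^ δ
        * (2 * ⨆ q : ℝ × E, |deriv (fun s ↦ w s q.2) q.1|) ^ (1 - δ) * Mδ * (h * r ^ δ) := by
  set A := ⨆ q : ℝ × E, |deriv (deriv fun s ↦ w s q.2) q.1|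
  set G := ⨆ q : ℝ × E, ‖fderiv ℝ (fun y ↦ deriv (fun s ↦ w s y) q.1) q.2‖
  set B := ⨆ q : ℝ × E, |deriv (fun s ↦ w s q.2) q.1|
  have hG₀ : 0 ≤ G := Real.iSup_nonneg fun _ ↦ norm_nonneg _
  have hB₀ : 0 ≤ B := Real.iSup_nonneg fun _ ↦ abs_nonneg _
  obtain ⟨M, hM⟩ := hwb
  have hshift (s : ℝ) : Measurable fun z ↦ w s (x + r • z) :=
    (hwm s).comp (by fun_prop : Continuous fun z : E ↦ x + r • z).measurable
  have norm_shift_rpow (z : E) : ‖x + r • z - x‖ ^ δ = r ^ δ * ‖z‖ ^ δ := by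
    rw [add_sub_cancel_left, norm_smul, Real.norm_of_nonneg hr, Real.mul_rpow hr (norm_nonneg z)]
  let φ (z : E) : ℝ := 1 / 2 * A * h ^ 2 + G ^ δ * (2 * B) ^ (1 - δ) * (h * r ^ δ) * ‖z‖ ^ δ
  have integral_φ_le (k : Λ) : ∫ z, φ z ∂μ k ≤
      1 / 2 * A * h ^ 2 + G ^ δ * (2 * B) ^ (1 - δ) * Mδ * (h * r ^ δ) := by
    rw [integral_add (integrable_const _) ((hMδint k).const_mul _), integral_const, probReal_univ,
      one_smul, integral_const_mul, mul_right_comm _ Mδ]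
    gcongr
    exact hMδ k
  refine abs_add_iSup_integral_sub_iSup_integral_le (φ := φ) (hshift _) (hshift _)
    (fun z ↦ hM _ _) (fun z ↦ hM _ _)
    (fun k ↦ (integrable_const _).add ((hMδint k).const_mul _)) integral_φ_le fun z ↦ ?_
  have pointwise_bound := abs_deriv_mul_add_sub_le hδ hh hwt hwtt hwtx (le_ciSup_prod hdttb)
    (le_ciSup_prod hdtb) (le_ciSup_prod hgradtb) t x (x + r • z)
  rwa [norm_shift_rpow, ← mul_assoc h, ← mul_assoc (G ^ δ * _)] at pointwise_bound

end Consistency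

/-- Consistency estimate for the time-derivative part `R₁` of the scheme. -/
theorem stmt_5 {d : ℕ} (hd : 1 ≤ d) {Λ : Type*} [Nonempty Λ]
    (μ : Λ → Measure (EuclideanSpace ℝ (Fin d)))
    (hμ : ∀ k, IsProbabilityMeasure (μ k))
    (α δ h : ℝ) (hα : α ∈ Set.Ioo (0:ℝ) 2) (hδ : δ ∈ Set.Ioc (0:ℝ) 1)
    (hh : h ∈ Set.Ioo (0:ℝ) 1)
    (Mδ : ℝ)
    (hMδint : ∀ k, Integrable (fun z => ‖z‖ ^ δ) (μ k))
    (hMδ : ∀ k, (∫ z, ‖z‖ ^ δ ∂(μ k)) ≤ Mδ)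
    (w : ℝ → EuclideanSpace ℝ (Fin d) → ℝ)
    (hw : ContDiff ℝ 2 (fun q : ℝ × EuclideanSpace ℝ (Fin d) => w q.1 q.2))
    (hwb : ∃ M, ∀ t x, |w t x| ≤ M)
    (hdtb : ∃ M, ∀ t x, |deriv (fun s => w s x) t| ≤ M)
    (hdttb : ∃ M, ∀ t x, |deriv (deriv (fun s => w s x)) t| ≤ M)
    (hgradtb : ∃ M, ∀ t x, ‖fderiv ℝ (fun y => deriv (fun s => w s y) t) x‖ ≤ M) :
    ∀ t x,
      |deriv (fun s => w s x) t * h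
        + (⨆ k, ∫ z, w (t - h) (x + h ^ (1/α) • z) ∂(μ k))
        - ⨆ k, ∫ z, w t (x + h ^ (1/α) • z) ∂(μ k)| ≤
      (1/2) * (⨆ q : ℝ × EuclideanSpace ℝ (Fin d),
          |deriv (deriv (fun s => w s q.2)) q.1|) * h ^ 2
      + (⨆ q : ℝ × EuclideanSpace ℝ (Fin d),
          ‖fderiv ℝ (fun y => deriv (fun s => w s y) q.1) q.2‖) ^ δ
        * (2 * ⨆ q : ℝ × EuclideanSpace ℝ (Fin d), |deriv (fun s => w s q.2) q.1|) ^ (1 - δ)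
        * Mδ * h ^ (1 + δ / α) := by
  intro t x
  have hdt : ContDiff ℝ 1 fun q : ℝ × EuclideanSpace ℝ (Fin d) ↦ deriv (fun s ↦ w s q.2) q.1 :=
    contDiff_deriv_fst hw one_add_one_eq_two.le
  rw [← mul_rpow_one_div_rpow hh.1]
  exact stmt_5_general hμ (Ioc_subset_Icc_self hδ) hh.1.le (Real.rpow_nonneg hh.1.le _) hMδint hMδ
    (fun s ↦ (hw.comp₂ contDiff_const contDiff_id).continuous.measurable)
    (fun y ↦ (hw.comp₂ contDiff_id contDiff_const).differentiable two_ne_zero)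
    (fun y ↦ (hdt.comp₂ contDiff_id contDiff_const).differentiable one_ne_zero)
    (fun s ↦ (hdt.comp₂ contDiff_const contDiff_id).differentiable one_ne_zero)
    hwb hdtb hdttb hgradtb t x
end

section
/- Let ε ∈ (0,1) and p > 1, and let u_h^ε denote the mollification of the scheme solution u_h (extended by the recursion to all t ≥ 0). Then for every t ≥ h and every x ∈ ℝ^d, sup_{k∈Λ} ∫_{ℝ^d} u_h^ε(t−h, x + h^{1/α} z) dμ_k(z) ≤ u_h^ε(t,x). -/
open MeasureTheory Set

/-!
Each translate `(t, x) ↦ u (t - τ) (x - e)` with `τ ≤ 0` satisfies the scheme for `t ≥ h`, the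
mollification is a nonnegative superposition of such translates, and a supremum of integrals of a
superposition is at most the superposition of the suprema.

Interchanging the integrals requires `u` to be jointly measurable. In time it is a step function;
in space, lower semicontinuity passes from `φ` to every time level, being stable under integration
(Fatou's lemma) and under arbitrary suprema.
-/

section Semicontinuity

variable {X Z : Type*} [TopologicalSpace X] [FirstCountableTopology X] [MeasurableSpace Z]
  {ν : Measure Z}

lemma lowerSemicontinuous_lintegral {F : X → Z → ENNReal} (hF : ∀ x, AEMeasurable (F x) ν)
    (hlsc : ∀ z, LowerSemicontinuous fun x => F x z) :
    LowerSemicontinuous fun x => ∫⁻ z, F x z ∂ν :=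
  lowerSemicontinuous_iff_le_liminf.2 fun x =>
    (lintegral_mono fun z => (hlsc z).le_liminf x).trans (lintegral_liminf_le' hF)

lemma lowerSemicontinuous_integral_of_nonneg {F : X → Z → ℝ} (hF : ∀ x, Integrable (F x) ν)
    (hnonneg : ∀ x z, 0 ≤ F x z) (hlsc : ∀ z, LowerSemicontinuous fun x => F x z) :
    LowerSemicontinuous fun x => ∫ z, F x z ∂ν := by
  have hlintegral : LowerSemicontinuous fun x => ENNReal.ofReal (∫ z, F x z ∂ν) := by
    simp only [fun x => ofReal_integral_eq_lintegral_ofReal (hF x) (ae_of_all _ (hnonneg x))]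
    exact lowerSemicontinuous_lintegral (fun x => (hF x).aemeasurable.ennreal_ofReal)
      fun z => ENNReal.continuous_ofReal.comp_lowerSemicontinuous (hlsc z) ENNReal.ofReal_mono
  intro x y hy
  rcases lt_or_ge y 0 with hneg | hpos
  · exact .of_forall fun x' => hneg.trans_le (integral_nonneg (hnonneg x'))
  · filter_upwards [hlintegral x _ ((ENNReal.ofReal_lt_ofReal_iff_of_nonneg hpos).2 hy)] with x' hx'
    exact (ENNReal.ofReal_lt_ofReal_iff_of_nonneg hpos).1 hx'

lemma lowerSemicontinuous_integral_of_le [IsFiniteMeasure ν] {F : X → Z → ℝ} {C : ℝ}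
    (hF : ∀ x, Integrable (F x) ν) (hC : ∀ x z, C ≤ F x z)
    (hlsc : ∀ z, LowerSemicontinuous fun x => F x z) :
    LowerSemicontinuous fun x => ∫ z, F x z ∂ν := by
  have hshift : LowerSemicontinuous fun x => ∫ z, (F x z + -C) ∂ν :=
    lowerSemicontinuous_integral_of_nonneg (fun x => (hF x).add (integrable_const _))
      (fun x z => by linarith [hC x z]) fun z => (hlsc z).add lowerSemicontinuous_const
  have hsplit : ∀ x, ∫ z, F x z ∂ν = ∫ z, (F x z + -C) ∂ν + ∫ _, C ∂ν := fun x => by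
    rw [integral_add (hF x) (integrable_const _), integral_neg, neg_add_cancel_right]
  simpa only [hsplit] using hshift.add lowerSemicontinuous_const

end Semicontinuity

section SublinearExpectation

variable {Λ Ω : Type*} [MeasurableSpace Ω]

/-- The sublinear expectation `Ê[f]` of a family of measures. It is meaningful for bounded
measurable `f` and probability measures; the supremum of an unbounded set of reals is `0`. -/
noncomputable def sublinearExpectation (μ : Λ → Measure Ω) (f : Ω → ℝ) : ℝ :=
  ⨆ k, ∫ z, f z ∂μ k

variable (μ : Λ → Measure Ω) [∀ k, IsProbabilityMeasure (μ k)] {f : Ω → ℝ} {M : ℝ}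

lemma abs_integral_le_of_abs_le (ν : Measure Ω) [IsProbabilityMeasure ν]
    (hf : ∀ z, |f z| ≤ M) : |∫ z, f z ∂ν| ≤ M := by
  simpa using norm_integral_le_of_norm_le_const (μ := ν) (f := f) (ae_of_all _ hf)

lemma bddAbove_range_integral (hf : ∀ z, |f z| ≤ M) :
    BddAbove (range fun k => ∫ z, f z ∂μ k) :=
  ⟨M, forall_mem_range.2 fun k => (abs_le.1 (abs_integral_le_of_abs_le (μ k) hf)).2⟩

lemma integral_le_sublinearExpectation (hf : ∀ z, |f z| ≤ M) (k : Λ) :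
    ∫ z, f z ∂μ k ≤ sublinearExpectation μ f :=
  le_ciSup (bddAbove_range_integral μ hf) k

lemma abs_sublinearExpectation_le [Nonempty Λ] (hf : ∀ z, |f z| ≤ M) :
    |sublinearExpectation μ f| ≤ M := by
  have hint : ∀ k, |∫ z, f z ∂μ k| ≤ M := fun k => abs_integral_le_of_abs_le (μ k) hf
  obtain ⟨k⟩ := ‹Nonempty Λ›
  exact abs_le.2 ⟨(abs_le.1 (hint k)).1.trans (integral_le_sublinearExpectation μ hf k),
    ciSup_le fun j => (abs_le.1 (hint j)).2⟩

lemma lowerSemicontinuous_sublinearExpectation {X : Type*} [TopologicalSpace X]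
    [FirstCountableTopology X] {F : X → Ω → ℝ} (hbound : ∀ x z, |F x z| ≤ M)
    (hmeas : ∀ x, Measurable (F x)) (hlsc : ∀ z, LowerSemicontinuous fun x => F x z) :
    LowerSemicontinuous fun x => sublinearExpectation μ (F x) :=
  lowerSemicontinuous_ciSup (fun x => bddAbove_range_integral μ (hbound x)) fun _ =>
    lowerSemicontinuous_integral_of_le
      (fun x => .of_bound (hmeas x).aestronglyMeasurable M (ae_of_all _ (hbound x)))
      (fun x z => (abs_le.1 (hbound x z)).1) hlsc

end SublinearExpectation

section Scheme

variable {Λ E : Type*} [AddCommGroup E] [Module ℝ E] [MeasurableSpace E]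

/-- One step `f ↦ Ê[f(x + c z)]` of the approximation scheme; the paper's `c` is `h ^ (1/α)`. -/
noncomputable def schemeStep (μ : Λ → Measure E) (c : ℝ) (f : E → ℝ) (x : E) : ℝ :=
  sublinearExpectation μ fun z => f (x + c • z)

/-- The solution `u_h` of the scheme in closed form: `⌊t / h⌋` steps applied to the initial datum.
It takes the value `φ` at negative times, so that it is jointly measurable on all of `ℝ × E`. -/
noncomputable def schemeSolution (μ : Λ → Measure E) (c h : ℝ) (φ : E → ℝ) (t : ℝ) : E → ℝ :=
  (schemeStep μ c)^[⌊t / h⌋₊] φ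

variable (μ : Λ → Measure E) (c : ℝ) {h M : ℝ} {φ : E → ℝ}

lemma schemeSolution_of_lt (hh : 0 < h) {t : ℝ} (ht : t < h) :
    schemeSolution μ c h φ t = φ := by
  rw [schemeSolution, Nat.floor_eq_zero.2 ((div_lt_one hh).2 ht), Function.iterate_zero_apply]

lemma schemeSolution_of_le (hh : 0 < h) {t : ℝ} (ht : h ≤ t) :
    schemeSolution μ c h φ t = schemeStep μ c (schemeSolution μ c h φ (t - h)) := by
  have hfloor : ⌊t / h⌋₊ = ⌊(t - h) / h⌋₊ + 1 := by
    rw [← Nat.floor_add_one (div_nonneg (sub_nonneg.2 ht) hh.le), sub_div, div_self hh.ne',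
      sub_add_cancel]
  rw [schemeSolution, hfloor, Function.iterate_succ_apply', schemeSolution]

lemma eq_schemeSolution (hh : 0 < h) {u : ℝ → E → ℝ}
    (hinit : ∀ t, 0 ≤ t → t < h → u t = φ)
    (hstep : ∀ t, h ≤ t → u t = schemeStep μ c (u (t - h))) {t : ℝ} (ht : 0 ≤ t) :
    u t = schemeSolution μ c h φ t := by
  have hlevel : ∀ n : ℕ, ∀ t, 0 ≤ t → t < (n + 1) * h → u t = schemeSolution μ c h φ t := by
    intro n
    induction n with
    | zero =>
      intro t ht0 hth
      have hth : t < h := by simpa using hth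
      rw [hinit t ht0 hth, schemeSolution_of_lt μ c hh hth]
    | succ n ih =>
      intro t ht0 htn
      rcases lt_or_ge t h with hth | hth
      · rw [hinit t ht0 hth, schemeSolution_of_lt μ c hh hth]
      · push_cast at htn
        rw [hstep t hth, schemeSolution_of_le μ c hh hth,
          ih (t - h) (by linarith) (by linarith)]
  exact hlevel ⌊t / h⌋₊ t ht ((div_lt_iff₀ hh).1 (Nat.lt_floor_add_one _))

variable [∀ k, IsProbabilityMeasure (μ k)]

lemma abs_iterate_schemeStep_le [Nonempty Λ] (hφ : ∀ x, |φ x| ≤ M) (n : ℕ) (x : E) :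
    |(schemeStep μ c)^[n] φ x| ≤ M := by
  induction n generalizing x with
  | zero => exact hφ x
  | succ n ih =>
    rw [Function.iterate_succ_apply']
    exact abs_sublinearExpectation_le μ fun z => ih (x + c • z)

lemma abs_schemeSolution_le [Nonempty Λ] (hφ : ∀ x, |φ x| ≤ M) (t : ℝ) (x : E) :
    |schemeSolution μ c h φ t x| ≤ M :=
  abs_iterate_schemeStep_le μ c hφ _ x

variable [TopologicalSpace E] [IsTopologicalAddGroup E] [ContinuousConstSMul ℝ E]
  [SecondCountableTopology E] [BorelSpace E]

lemma lowerSemicontinuous_schemeStep (hφ : ∀ x, |φ x| ≤ M) (hlsc : LowerSemicontinuous φ) :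
    LowerSemicontinuous (schemeStep μ c φ) :=
  lowerSemicontinuous_sublinearExpectation μ (fun _ _ => hφ _)
    (fun _ => hlsc.measurable.comp (by fun_prop))
    fun _ => LowerSemicontinuous.comp hlsc (by fun_prop)

lemma lowerSemicontinuous_iterate_schemeStep [Nonempty Λ] (hφ : ∀ x, |φ x| ≤ M)
    (hlsc : LowerSemicontinuous φ) (n : ℕ) :
    LowerSemicontinuous ((schemeStep μ c)^[n] φ) := by
  induction n with
  | zero => exact hlsc
  | succ n ih =>
    rw [Function.iterate_succ_apply']
    exact lowerSemicontinuous_schemeStep μ c (abs_iterate_schemeStep_le μ c hφ n) ih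

lemma measurable_schemeSolution [Nonempty Λ] (hφ : ∀ x, |φ x| ≤ M)
    (hlsc : LowerSemicontinuous φ) :
    Measurable fun q : ℝ × E => schemeSolution μ c h φ q.1 q.2 := by
  have hlevels : Measurable fun q : ℕ × E => (schemeStep μ c)^[q.1] φ q.2 :=
    measurable_from_prod_countable_right fun n =>
      (lowerSemicontinuous_iterate_schemeStep μ c hφ hlsc n).measurable
  exact hlevels.comp (by fun_prop : Measurable fun q : ℝ × E => (⌊q.1 / h⌋₊, q.2))

end Scheme

section Mollification

variable {E : Type*} [AddCommGroup E] {K : ℝ × E → ℝ} {w : ℝ → E → ℝ} {M : ℝ}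

lemma mul_kernel_congr_of_nonneg {u : ℝ → E → ℝ} (huw : ∀ t, 0 ≤ t → u t = w t)
    (hKtime : ∀ q : ℝ × E, 0 < q.1 → K q = 0) {t : ℝ} (ht : 0 ≤ t) (x : E) (q : ℝ × E) :
    u (t - q.1) (x - q.2) * K q = w (t - q.1) (x - q.2) * K q := by
  rcases lt_or_ge 0 q.1 with hq | hq
  · simp only [hKtime q hq, mul_zero]
  · rw [huw (t - q.1) (by linarith)]

variable [MeasurableSpace E]

/-- The mollification of `w` by the kernel `K`, taken with respect to a reference measure `ρ` on
space-time. -/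
noncomputable def mollification (ρ : Measure (ℝ × E)) (K : ℝ × E → ℝ) (w : ℝ → E → ℝ)
    (t : ℝ) (x : E) : ℝ :=
  ∫ q, w (t - q.1) (x - q.2) * K q ∂ρ

variable [MeasurableSub₂ E]

lemma integrable_mul_kernel {ρ : Measure (ℝ × E)} (hw : ∀ t x, |w t x| ≤ M)
    (hwmeas : Measurable fun q : ℝ × E => w q.1 q.2) (hK : Integrable K ρ) (t : ℝ) (x : E) :
    Integrable (fun q : ℝ × E => w (t - q.1) (x - q.2) * K q) ρ :=
  hK.bdd_mul (hwmeas.comp (by fun_prop : Measurable fun q : ℝ × E =>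
    (t - q.1, x - q.2))).aestronglyMeasurable (ae_of_all _ fun _ => hw _ _)

lemma mollification_prod {ν : Measure ℝ} {m : Measure E} [SFinite ν] [SFinite m]
    (hw : ∀ t x, |w t x| ≤ M) (hwmeas : Measurable fun q : ℝ × E => w q.1 q.2)
    (hK : Integrable K (ν.prod m)) (t : ℝ) (x : E) :
    mollification (ν.prod m) K w t x = ∫ τ, ∫ e, w (t - τ) (x - e) * K (τ, e) ∂m ∂ν :=
  integral_prod _ (integrable_mul_kernel hw hwmeas hK t x)

variable [Module ℝ E] [MeasurableAdd₂ E] [MeasurableConstSMul ℝ E]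
  {ρ : Measure (ℝ × E)} [SFinite ρ]

lemma integrable_translate_mul_kernel (π : Measure E) [IsFiniteMeasure π] (c : ℝ)
    (hw : ∀ t x, |w t x| ≤ M) (hwmeas : Measurable fun q : ℝ × E => w q.1 q.2)
    (hK : Integrable K ρ) (t : ℝ) (x : E) :
    Integrable (fun r : E × (ℝ × E) => w (t - r.2.1) (x + c • r.1 - r.2.2) * K r.2)
      (π.prod ρ) :=
  (hK.comp_snd π).bdd_mul (hwmeas.comp (by fun_prop : Measurable fun r : E × (ℝ × E) =>
    (t - r.2.1, x + c • r.1 - r.2.2))).aestronglyMeasurable (ae_of_all _ fun _ => hw _ _)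

lemma integral_mollification (π : Measure E) [IsFiniteMeasure π] (c : ℝ)
    (hw : ∀ t x, |w t x| ≤ M) (hwmeas : Measurable fun q : ℝ × E => w q.1 q.2)
    (hK : Integrable K ρ) (t : ℝ) (x : E) :
    ∫ z, mollification ρ K w t (x + c • z) ∂π =
      ∫ q, (∫ z, w (t - q.1) (x + c • z - q.2) ∂π) * K q ∂ρ := by
  simp only [mollification, ← integral_mul_const]
  exact integral_integral_swap (integrable_translate_mul_kernel π c hw hwmeas hK t x)

theorem schemeStep_mollification_le {Λ : Type*} [Nonempty Λ] (μ : Λ → Measure E)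
    [∀ k, IsProbabilityMeasure (μ k)] (c : ℝ) {h : ℝ} (hw : ∀ t x, |w t x| ≤ M)
    (hwmeas : Measurable fun q : ℝ × E => w q.1 q.2)
    (hsuper : ∀ t, h ≤ t → ∀ x, schemeStep μ c (w (t - h)) x ≤ w t x)
    (hK : Integrable K ρ) (hKnonneg : ∀ q, 0 ≤ K q) (hKtime : ∀ q : ℝ × E, 0 < q.1 → K q = 0)
    {t : ℝ} (ht : h ≤ t) (x : E) :
    schemeStep μ c (mollification ρ K w (t - h)) x ≤ mollification ρ K w t x := by
  refine ciSup_le fun k => ?_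
  have htranslate : ∀ q : ℝ × E, q.1 ≤ 0 →
      ∫ z, w (t - h - q.1) (x + c • z - q.2) ∂μ k ≤ w (t - q.1) (x - q.2) := fun q hq => by
    simp only [sub_right_comm t h, add_sub_right_comm x]
    exact (integral_le_sublinearExpectation μ (fun z => hw _ (x - q.2 + c • z)) k).trans
      (hsuper (t - q.1) (by linarith) (x - q.2))
  rw [integral_mollification (μ k) c hw hwmeas hK]
  refine integral_mono ?_ (integrable_mul_kernel hw hwmeas hK t x) fun q => ?_
  · simpa only [integral_mul_const] using
      (integrable_translate_mul_kernel (μ k) c hw hwmeas hK (t - h) x).integral_prod_right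
  · rcases lt_or_ge 0 q.1 with hq | hq
    · simp only [hKtime q hq, mul_zero, le_refl]
    · exact mul_le_mul_of_nonneg_right (htranslate q hq) (hKnonneg q)

end Mollification

lemma integrable_comp_div_smul {E : Type*} [TopologicalSpace E] [MulAction ℝ E]
    [ContinuousConstSMul ℝ E] [MeasurableSpace E] [OpensMeasurableSpace E]
    {ρ : Measure (ℝ × E)} [IsFiniteMeasureOnCompacts ρ] {ζ : ℝ × E → ℝ} (hζ : Continuous ζ)
    (hsupp : HasCompactSupport ζ) {a b : ℝ} (ha : a ≠ 0) (hb : b ≠ 0) :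
    Integrable (fun q : ℝ × E => ζ (q.1 / a, b • q.2)) ρ := by
  let dilation : ℝ × E ≃ₜ ℝ × E :=
    (Homeomorph.mulRight₀ a⁻¹ (inv_ne_zero ha)).prodCongr (Homeomorph.smulOfNeZero b hb)
  simp only [div_eq_mul_inv]
  exact (hζ.comp dilation.continuous).integrable_of_hasCompactSupport
    (hsupp.comp_homeomorph dilation)

theorem stmt_6_general {Λ E : Type*} [AddCommGroup E] [Module ℝ E] [TopologicalSpace E]
    [IsTopologicalAddGroup E] [ContinuousConstSMul ℝ E] [SecondCountableTopology E]
    [MeasurableSpace E] [BorelSpace E] [Nonempty Λ] (μ : Λ → Measure E)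
    [∀ k, IsProbabilityMeasure (μ k)] {h c : ℝ} (hh : 0 < h) {φ : E → ℝ} {M : ℝ}
    (hφb : ∀ x, |φ x| ≤ M) (hφlsc : LowerSemicontinuous φ) {u : ℝ → E → ℝ}
    (hu0 : ∀ t, 0 ≤ t → t < h → ∀ x, u t x = φ x)
    (hurec : ∀ t, h ≤ t → ∀ x, u t x = ⨆ k, ∫ z, u (t - h) (x + c • z) ∂μ k)
    {ν : Measure ℝ} {m : Measure E} [SFinite ν] [SFinite m] {K : ℝ × E → ℝ}
    (hK : Integrable K (ν.prod m)) (hKnonneg : ∀ q, 0 ≤ K q)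
    (hKtime : ∀ q : ℝ × E, 0 < q.1 → K q = 0) {uK : ℝ → E → ℝ}
    (huK : ∀ t x, uK t x = ∫ τ, ∫ e, u (t - τ) (x - e) * K (τ, e) ∂m ∂ν)
    {t : ℝ} (ht : h ≤ t) (x : E) :
    ⨆ k, ∫ z, uK (t - h) (x + c • z) ∂μ k ≤ uK t x := by
  set v := schemeSolution μ c h φ
  have huv : ∀ t, 0 ≤ t → u t = v t := fun t => eq_schemeSolution μ c hh
    (fun t ht0 hth => funext (hu0 t ht0 hth)) fun t hth => funext (hurec t hth)
  have hvb : ∀ t x, |v t x| ≤ M := abs_schemeSolution_le μ c hφb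
  have hvmeas : Measurable fun q : ℝ × E => v q.1 q.2 := measurable_schemeSolution μ c hφb hφlsc
  have huKv : ∀ t, 0 ≤ t → uK t = mollification (ν.prod m) K v t := fun t ht0 => funext fun x => by
    simp only [huK, mollification_prod hvb hvmeas hK,
      fun τ e => mul_kernel_congr_of_nonneg huv hKtime ht0 x (τ, e)]
  rw [huKv t (hh.le.trans ht), huKv (t - h) (sub_nonneg.2 ht)]
  exact schemeStep_mollification_le μ c hvb hvmeas
    (fun t hth x => (congrFun (schemeSolution_of_le μ c hh hth) x).ge) hK hKnonneg hKtime ht x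

/-- The mollification of the scheme solution is a supersolution of the scheme:
`Ê[u_h^ε(t-h, x + h^{1/α} z)] ≤ u_h^ε(t,x)` for `t ≥ h`. -/
theorem stmt_6 {d : ℕ} (hd : 1 ≤ d) {Λ : Type*} [Nonempty Λ]
    (μ : Λ → Measure (EuclideanSpace ℝ (Fin d)))
    (hμ : ∀ k, IsProbabilityMeasure (μ k))
    (h α : ℝ) (hh : h ∈ Set.Ioo (0:ℝ) 1) (hα : α ∈ Set.Ioo (0:ℝ) 2)
    (φ : EuclideanSpace ℝ (Fin d) → ℝ) (Mφ Cφ : ℝ)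
    (hφb : ∀ x, |φ x| ≤ Mφ)
    (hφlip : ∀ x y, |φ x - φ y| ≤ Cφ * ‖x - y‖)
    (u : ℝ → EuclideanSpace ℝ (Fin d) → ℝ)
    (hu0 : ∀ t, 0 ≤ t → t < h → ∀ x, u t x = φ x)
    (hurec : ∀ t, h ≤ t → ∀ x,
      u t x = ⨆ k, ∫ z, u (t - h) (x + h ^ (1/α) • z) ∂(μ k))
    (ζ : ℝ × EuclideanSpace ℝ (Fin d) → ℝ)
    (hζsmooth : ContDiff ℝ (⊤ : ℕ∞) ζ)
    (hζnonneg : ∀ q, 0 ≤ ζ q)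
    (hζint : ∫ q : ℝ × EuclideanSpace ℝ (Fin d), ζ q = 1)
    (hζsupp : Function.support ζ ⊆
      Set.Icc (-1:ℝ) 0 ×ˢ Metric.closedBall (0 : EuclideanSpace ℝ (Fin d)) 1)
    (ε p : ℝ) (hε : ε ∈ Set.Ioo (0:ℝ) 1) (hp : 1 < p)
    (uε : ℝ → EuclideanSpace ℝ (Fin d) → ℝ)
    (huε : ∀ t x, uε t x = ∫ (τ : ℝ), ∫ (e : EuclideanSpace ℝ (Fin d)),
      u (t - τ) (x - e) * (ε ^ (-(p + (d:ℝ))) * ζ (τ / ε ^ p, ε⁻¹ • e))) :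
    ∀ t, h ≤ t → ∀ x,
      (⨆ k, ∫ z, uε (t - h) (x + h ^ (1/α) • z) ∂(μ k)) ≤ uε t x := by
  have hεp : 0 < ε ^ p := Real.rpow_pos_of_pos hε.1 p
  have hφlsc : LowerSemicontinuous φ :=
    (LipschitzWith.of_dist_le' (K := Cφ) fun x y => by
      simpa only [dist_eq_norm, Real.norm_eq_abs] using hφlip x y).continuous.lowerSemicontinuous
  have hζcompact : HasCompactSupport ζ :=
    .of_support_subset_isCompact (isCompact_Icc.prod (isCompact_closedBall 0 1)) hζsupp
  have hζtime : ∀ q : ℝ × EuclideanSpace ℝ (Fin d), 0 < q.1 → ζ q = 0 := fun q hq =>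
    Function.notMem_support.1 fun hmem => hq.not_ge (hζsupp hmem).1.2
  intro t ht x
  exact stmt_6_general μ hh.1 hφb hφlsc hu0 hurec
    ((integrable_comp_div_smul hζsmooth.continuous hζcompact hεp.ne'
      (inv_ne_zero hε.1.ne')).const_mul _)
    (fun q => mul_nonneg (Real.rpow_nonneg hε.1.le _) (hζnonneg _))
    (fun q hq => by rw [hζtime _ (div_pos hq hεp), mul_zero]) huε ht x
end

section
/- Let α ∈ (1,2), s ∈ (0,1], and let φ : ℝ → ℝ be twice continuously differentiable with φ, φ′, φ″ bounded. Let β : (0,∞) → ℝ be a bounded continuously differentiable function. Then for every x ∈ ℝ, | ∫_{s^{1/α}}^1 δ_λφ(x) (α β(s^{−1/α} λ) − β′(s^{−1/α} λ) s^{−1/α} λ) λ^{−α−1} dλ | ≤ (1/2) ‖φ″‖_∞ |β(1)| s^{(2−α)/α} + 2 ‖φ′‖_∞ |β(s^{−1/α})| + ‖φ″‖_∞ ∫_0^1 |β(s^{−1/α} λ)| λ^{1−α} dλ, where δ_λφ(x) := φ(x+λ) − φ(x) − φ′(x) λ. -/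
open MeasureTheory Set Filter

/-!
With `w l = β (c * l) * l ^ (-α)`, the factor multiplying `δ_l φ(x)` in the integrand is exactly
`-w' l`. Integrating by parts therefore moves the derivative onto `δ_l φ(x)`, whose derivative
`φ' (x + l) - φ' x` is at most `‖φ''‖_∞ * l` and cancels one power of the singularity. With
`c = s ^ (-1 / α)` the lower boundary term sits at `c * l = 1` and is controlled by the second-order
bound on `δ_l φ(x)`; the upper one, at `l = 1`, by the first-order bound.
-/

section TaylorRemainder

variable {E : Type*} [NormedAddCommGroup E] [NormedSpace ℝ E] {f φ : ℝ → E} {C K L : ℝ}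

/-- The first-order Taylor remainder `δ_l φ(x) = φ(x + l) - φ(x) - φ'(x) l`, as a function of the
increment `l`. -/
noncomputable def taylorRemainder (φ : ℝ → E) (x l : ℝ) : E :=
  φ (x + l) - φ x - l • deriv φ x

lemma taylorRemainder_zero (φ : ℝ → E) (x : ℝ) : taylorRemainder φ x 0 = 0 := by
  simp [taylorRemainder]

lemma hasDerivAt_taylorRemainder (hφ : Differentiable ℝ φ) (x l : ℝ) :
    HasDerivAt (taylorRemainder φ x) (deriv φ (x + l) - deriv φ x) l := by
  have hshift : HasDerivAt (fun l ↦ φ (x + l)) (deriv φ (x + l)) l :=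
    (hφ (x + l)).hasDerivAt.comp_const_add x l
  have hlinear : HasDerivAt (fun l : ℝ ↦ l • deriv φ x) (deriv φ x) l := by
    simpa using (hasDerivAt_id l).smul_const (deriv φ x)
  exact (hshift.sub_const (φ x)).sub hlinear

lemma norm_add_sub_le_of_norm_deriv_le (hf : Differentiable ℝ f) (hC : ∀ y, ‖deriv f y‖ ≤ C)
    (x l : ℝ) : ‖f (x + l) - f x‖ ≤ C * |l| := by
  simpa using convex_univ.norm_image_sub_le_of_norm_deriv_le
    (fun y _ ↦ hf y) (fun y _ ↦ hC y) (mem_univ x) (mem_univ (x + l))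

lemma norm_taylorRemainder_le (hφ : Differentiable ℝ φ) (hL : ∀ y, ‖deriv φ y‖ ≤ L) (x l : ℝ) :
    ‖taylorRemainder φ x l‖ ≤ 2 * L * |l| :=
  calc ‖taylorRemainder φ x l‖ ≤ ‖φ (x + l) - φ x‖ + ‖l • deriv φ x‖ := norm_sub_le _ _
    _ ≤ L * |l| + |l| * L := by
      rw [norm_smul, Real.norm_eq_abs]
      gcongr
      · exact norm_add_sub_le_of_norm_deriv_le hφ hL x l
      · exact hL x
    _ = 2 * L * |l| := by ring

-- Comparing along the segment `t ↦ t * l`, `t ∈ [0, 1]`, treats both signs of `l` at once.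
lemma norm_taylorRemainder_le_sq (hφ : Differentiable ℝ φ) (hφ' : Differentiable ℝ (deriv φ))
    (hK : ∀ y, ‖deriv (deriv φ) y‖ ≤ K) (x l : ℝ) :
    ‖taylorRemainder φ x l‖ ≤ 1 / 2 * K * l ^ 2 := by
  have hderiv (t : ℝ) : HasDerivAt (fun t ↦ taylorRemainder φ x (t * l))
      (l • (deriv φ (x + t * l) - deriv φ x)) t :=
    HasDerivAt.scomp (g₁ := taylorRemainder φ x) (h := (· * l)) t
      (hasDerivAt_taylorRemainder hφ x (t * l)) (hasDerivAt_mul_const l)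
  have hbound (t : ℝ) : HasDerivAt (fun t ↦ 1 / 2 * K * l ^ 2 * t ^ 2) (K * l ^ 2 * t) t :=
    ((hasDerivAt_pow 2 t).const_mul (1 / 2 * K * l ^ 2)).congr_deriv (by norm_num; ring)
  have hcomp : ∀ t ∈ Ico (0 : ℝ) 1,
      ‖l • (deriv φ (x + t * l) - deriv φ x)‖ ≤ K * l ^ 2 * t := by
    intro t ht
    calc ‖l • (deriv φ (x + t * l) - deriv φ x)‖ ≤ |l| * (K * |t * l|) := by
          rw [norm_smul, Real.norm_eq_abs]
          gcongr
          exact norm_add_sub_le_of_norm_deriv_le hφ' hK x (t * l)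
      _ = K * l ^ 2 * t := by rw [abs_mul, abs_of_nonneg ht.1, ← sq_abs l]; ring
  simpa using image_norm_le_of_norm_deriv_right_le_deriv_boundary
    (fun t _ ↦ (hderiv t).continuousAt.continuousWithinAt) (fun t _ ↦ (hderiv t).hasDerivWithinAt)
    (by simp [taylorRemainder_zero]) hbound hcomp (right_mem_Icc.2 zero_le_one)

end TaylorRemainder

section PowerWeight

variable {α c a b l : ℝ} {β β' : ℝ → ℝ}

/-- The weight `β(c l) l^(-α)`: the profile `β` rescaled by `c` against a power singularity. It is
the antiderivative, up to sign, of the kernel to be integrated by parts. -/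
noncomputable def powerWeight (α c : ℝ) (β : ℝ → ℝ) (l : ℝ) : ℝ :=
  β (c * l) * l ^ (-α)

lemma hasDerivAt_powerWeight {d : ℝ} (hβ : HasDerivAt β d (c * l)) (hl : 0 < l) :
    HasDerivAt (powerWeight α c β) (-((α * β (c * l) - d * c * l) * l ^ (-α - 1))) l := by
  have hscaled : HasDerivAt (fun l ↦ β (c * l)) (d * c) l :=
    hβ.comp l (hasDerivAt_const_mul c)
  refine (hscaled.mul (Real.hasDerivAt_rpow_const (p := -α) (.inl hl.ne'))).congr_deriv ?_
  have hpow : l ^ (-α) = l ^ (-α - 1) * l := by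
    rw [← Real.rpow_add_one hl.ne', sub_add_cancel]
  rw [hpow]
  ring

lemma abs_powerWeight (hl : 0 ≤ l) : |powerWeight α c β l| = |β (c * l)| * l ^ (-α) := by
  rw [powerWeight, abs_mul, abs_of_nonneg (Real.rpow_nonneg hl _)]

lemma continuousOn_comp_const_mul_Ioi {X : Type*} [TopologicalSpace X] {f : ℝ → X}
    (hf : ContinuousOn f (Ioi 0)) (hc : 0 < c) : ContinuousOn (fun l ↦ f (c * l)) (Ioi 0) :=
  hf.comp (continuousOn_const.mul continuousOn_id) fun _ hl ↦ mul_pos hc hl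

lemma continuousOn_rpow_const_Ioi (p : ℝ) : ContinuousOn (fun l : ℝ ↦ l ^ p) (Ioi 0) :=
  continuousOn_id.rpow_const fun _ hl ↦ .inl (ne_of_gt hl)

lemma intervalIntegrable_comp_const_mul {F : Type*} [NormedAddCommGroup F] {f : ℝ → F}
    (hf : LocallyIntegrableOn f (Ioi 0)) (hc : 0 < c) (ha : 0 < a) (hb : 0 < b) :
    IntervalIntegrable (fun l ↦ f (c * l)) volume a b := by
  have hint : IntervalIntegrable f volume (c * a) (c * b) :=
    (hf.integrableOn_compact_subset (ordConnected_Ioi.uIcc_subset (mul_pos hc ha) (mul_pos hc hb))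
      isCompact_uIcc).intervalIntegrable
  simpa [hc.ne'] using hint.comp_mul_left (c := c)

lemma intervalIntegrable_deriv_powerWeight (hβ : ContinuousOn β (Ioi 0))
    (hβ' : LocallyIntegrableOn β' (Ioi 0)) (hc : 0 < c) (ha : 0 < a) (hb : 0 < b) :
    IntervalIntegrable (fun l ↦ -((α * β (c * l) - β' (c * l) * c * l) * l ^ (-α - 1)))
      volume a b := by
  have hsub : uIcc a b ⊆ Ioi 0 := ordConnected_Ioi.uIcc_subset ha hb
  have hβterm : IntervalIntegrable (fun l ↦ α * β (c * l)) volume a b :=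
    (((continuousOn_comp_const_mul_Ioi hβ hc).mono hsub).intervalIntegrable).const_mul α
  have hβ'term : IntervalIntegrable (fun l ↦ β' (c * l) * c * l) volume a b :=
    ((intervalIntegrable_comp_const_mul hβ' hc ha hb).mul_const c).mul_continuousOn continuousOn_id
  exact ((hβterm.sub hβ'term).mul_continuousOn ((continuousOn_rpow_const_Ioi _).mono hsub)).neg

lemma integrableOn_abs_comp_const_mul_mul_rpow (hα : α < 2) (hβ : ContinuousOn β (Ioi 0))
    (hβb : ∃ M, ∀ y > 0, |β y| ≤ M) (hc : 0 < c) (b : ℝ) :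
    IntegrableOn (fun l ↦ |β (c * l)| * l ^ (1 - α)) (Ioc 0 b) := by
  obtain ⟨M, hM⟩ := hβb
  have hpow : IntegrableOn (fun l : ℝ ↦ l ^ (1 - α)) (Ioc 0 b) :=
    (intervalIntegral.intervalIntegrable_rpow' (by linarith)).1
  refine hpow.bdd_mul (c := M) ?_ ?_
  · exact ((continuousOn_comp_const_mul_Ioi hβ hc).mono
      Ioc_subset_Ioi_self).abs.aestronglyMeasurable measurableSet_Ioc
  · filter_upwards [ae_restrict_mem measurableSet_Ioc] with l hl
    simpa using hM (c * l) (mul_pos hc hl.1)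

end PowerWeight

section IntegrationByParts

variable {E : Type*} [NormedAddCommGroup E] [NormedSpace ℝ E] {φ : ℝ → E}
  {α c a b K L : ℝ} {β β' : ℝ → ℝ}

lemma integral_smul_taylorRemainder [CompleteSpace E]
    (hφ : Differentiable ℝ φ) (hφ' : Continuous (deriv φ))
    (hβ : ∀ y > 0, HasDerivAt β (β' y) y) (hβ' : LocallyIntegrableOn β' (Ioi 0))
    (hc : 0 < c) (ha : 0 < a) (hb : 0 < b) (x : ℝ) :
    ∫ l in a..b, ((α * β (c * l) - β' (c * l) * c * l) * l ^ (-α - 1)) • taylorRemainder φ x l =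
      powerWeight α c β a • taylorRemainder φ x a - powerWeight α c β b • taylorRemainder φ x b +
        ∫ l in a..b, powerWeight α c β l • (deriv φ (x + l) - deriv φ x) := by
  have hβcont : ContinuousOn β (Ioi 0) := HasDerivAt.continuousOn hβ
  have hparts := intervalIntegral.integral_smul_deriv_eq_deriv_smul
    (u := powerWeight α c β) (v := taylorRemainder φ x)
    (fun l hl ↦
      have hl₀ : 0 < l := ordConnected_Ioi.uIcc_subset ha hb hl
      hasDerivAt_powerWeight (hβ _ (mul_pos hc hl₀)) hl₀)
    (fun l _ ↦ hasDerivAt_taylorRemainder hφ x l)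
    (intervalIntegrable_deriv_powerWeight hβcont hβ' hc ha hb)
    ((by fun_prop : Continuous fun l ↦ deriv φ (x + l) - deriv φ x).intervalIntegrable a b)
  simp only [neg_smul, intervalIntegral.integral_neg] at hparts
  rw [hparts]
  abel

lemma norm_powerWeight_smul_deriv_sub_le (hφ' : Differentiable ℝ (deriv φ))
    (hK : ∀ y, ‖deriv (deriv φ) y‖ ≤ K) (x : ℝ) {l : ℝ} (hl : 0 < l) :
    ‖powerWeight α c β l • (deriv φ (x + l) - deriv φ x)‖ ≤
      K * (|β (c * l)| * l ^ (1 - α)) :=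
  calc ‖powerWeight α c β l • (deriv φ (x + l) - deriv φ x)‖
      ≤ |β (c * l)| * l ^ (-α) * (K * l) := by
        have hincr := norm_add_sub_le_of_norm_deriv_le hφ' hK x l
        rw [abs_of_pos hl] at hincr
        rw [norm_smul, Real.norm_eq_abs, abs_powerWeight hl.le]
        gcongr
    _ = K * (|β (c * l)| * l ^ (1 - α)) := by
        rw [sub_eq_neg_add, Real.rpow_add_one hl.ne']
        ring

lemma norm_powerWeight_smul_taylorRemainder_le (hφ : Differentiable ℝ φ)
    (hL : ∀ y, ‖deriv φ y‖ ≤ L) (x : ℝ) {l : ℝ} (hl : 0 < l) :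
    ‖powerWeight α c β l • taylorRemainder φ x l‖ ≤ 2 * L * |β (c * l)| * l ^ (1 - α) :=
  calc ‖powerWeight α c β l • taylorRemainder φ x l‖
      ≤ |β (c * l)| * l ^ (-α) * (2 * L * l) := by
        have hrem := norm_taylorRemainder_le hφ hL x l
        rw [abs_of_pos hl] at hrem
        rw [norm_smul, Real.norm_eq_abs, abs_powerWeight hl.le]
        gcongr
    _ = 2 * L * |β (c * l)| * l ^ (1 - α) := by
        rw [sub_eq_neg_add, Real.rpow_add_one hl.ne']
        ring

lemma norm_powerWeight_smul_taylorRemainder_le_sq (hφ : Differentiable ℝ φ)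
    (hφ' : Differentiable ℝ (deriv φ)) (hK : ∀ y, ‖deriv (deriv φ) y‖ ≤ K) (x : ℝ) {l : ℝ}
    (hl : 0 < l) :
    ‖powerWeight α c β l • taylorRemainder φ x l‖ ≤ 1 / 2 * K * |β (c * l)| * l ^ (2 - α) :=
  calc ‖powerWeight α c β l • taylorRemainder φ x l‖
      ≤ |β (c * l)| * l ^ (-α) * (1 / 2 * K * l ^ 2) := by
        rw [norm_smul, Real.norm_eq_abs, abs_powerWeight hl.le]
        gcongr
        exact norm_taylorRemainder_le_sq hφ hφ' hK x l
    _ = 1 / 2 * K * |β (c * l)| * l ^ (2 - α) := by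
        rw [sub_eq_neg_add, Real.rpow_add hl, Real.rpow_two]
        ring

theorem norm_integral_smul_taylorRemainder_le [CompleteSpace E]
    (hφ : Differentiable ℝ φ) (hφ' : Differentiable ℝ (deriv φ))
    (hL : ∀ y, ‖deriv φ y‖ ≤ L) (hK : ∀ y, ‖deriv (deriv φ) y‖ ≤ K)
    (hβ : ∀ y > 0, HasDerivAt β (β' y) y) (hβ' : LocallyIntegrableOn β' (Ioi 0))
    (hc : 0 < c) (ha : 0 < a) (hab : a ≤ b) (x : ℝ) :
    ‖∫ l in a..b,
        ((α * β (c * l) - β' (c * l) * c * l) * l ^ (-α - 1)) • taylorRemainder φ x l‖ ≤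
      1 / 2 * K * |β (c * a)| * a ^ (2 - α) + 2 * L * |β (c * b)| * b ^ (1 - α) +
        K * ∫ l in a..b, |β (c * l)| * l ^ (1 - α) := by
  have hb : 0 < b := ha.trans_le hab
  have hβcont : ContinuousOn β (Ioi 0) := HasDerivAt.continuousOn hβ
  have hdominating : IntervalIntegrable (fun l ↦ K * (|β (c * l)| * l ^ (1 - α))) volume a b :=
    ((((continuousOn_comp_const_mul_Ioi hβcont hc).abs.mul (continuousOn_rpow_const_Ioi _)).mono
      (ordConnected_Ioi.uIcc_subset ha hb)).intervalIntegrable).const_mul K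
  have hinner : ‖∫ l in a..b, powerWeight α c β l • (deriv φ (x + l) - deriv φ x)‖ ≤
      K * ∫ l in a..b, |β (c * l)| * l ^ (1 - α) := by
    rw [← intervalIntegral.integral_const_mul]
    exact intervalIntegral.norm_integral_le_of_norm_le hab
      (.of_forall fun l hl ↦ norm_powerWeight_smul_deriv_sub_le hφ' hK x (ha.trans hl.1))
      hdominating
  rw [integral_smul_taylorRemainder hφ hφ'.continuous hβ hβ' hc ha hb]
  refine (norm_add_le _ _).trans (add_le_add ((norm_sub_le _ _).trans (add_le_add ?_ ?_)) hinner)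
  · exact norm_powerWeight_smul_taylorRemainder_le_sq hφ hφ' hK x ha
  · exact norm_powerWeight_smul_taylorRemainder_le hφ hL x hb

end IntegrationByParts

theorem stmt_9_general {E : Type*} [NormedAddCommGroup E] [NormedSpace ℝ E] [CompleteSpace E]
    {α s : ℝ} (hα : 0 < α) (hs : s ∈ Ioc (0 : ℝ) 1)
    {φ : ℝ → E} (hφ : Differentiable ℝ φ) (hφ' : Differentiable ℝ (deriv φ))
    (hφ'b : ∃ M, ∀ x, ‖deriv φ x‖ ≤ M) (hφ''b : ∃ M, ∀ x, ‖deriv (deriv φ) x‖ ≤ M)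
    {β β' : ℝ → ℝ} (hβ : ∀ y > 0, HasDerivAt β (β' y) y)
    (hβ' : LocallyIntegrableOn β' (Ioi 0))
    (hβint : IntegrableOn (fun l ↦ |β (s ^ (-(1 / α)) * l)| * l ^ (1 - α)) (Ioc 0 1)) (x : ℝ) :
    ‖∫ l in Ioc (s ^ (1 / α)) 1,
        ((α * β (s ^ (-(1 / α)) * l) - β' (s ^ (-(1 / α)) * l) * s ^ (-(1 / α)) * l) *
          l ^ (-α - 1)) • taylorRemainder φ x l‖ ≤
      1 / 2 * (⨆ y, ‖deriv (deriv φ) y‖) * |β 1| * s ^ ((2 - α) / α) +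
        2 * (⨆ y, ‖deriv φ y‖) * |β (s ^ (-(1 / α)))| +
        (⨆ y, ‖deriv (deriv φ) y‖) *
          ∫ l in Ioc 0 1, |β (s ^ (-(1 / α)) * l)| * l ^ (1 - α) := by
  obtain ⟨hs₀, hs₁⟩ := hs
  have hL : ∀ y, ‖deriv φ y‖ ≤ ⨆ y, ‖deriv φ y‖ := le_ciSup (hφ'b.imp fun _ ↦ forall_mem_range.2)
  have hK : ∀ y, ‖deriv (deriv φ) y‖ ≤ ⨆ y, ‖deriv (deriv φ) y‖ :=
    le_ciSup (hφ''b.imp fun _ ↦ forall_mem_range.2)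
  have ha : 0 < s ^ (1 / α) := Real.rpow_pos_of_pos hs₀ _
  have ha₁ : s ^ (1 / α) ≤ 1 := Real.rpow_le_one hs₀.le hs₁ (by positivity)
  have hscale : s ^ (-(1 / α)) * s ^ (1 / α) = 1 := by
    rw [← Real.rpow_add hs₀, neg_add_cancel, Real.rpow_zero]
  have hpow : (s ^ (1 / α)) ^ (2 - α) = s ^ ((2 - α) / α) := by
    rw [← Real.rpow_mul hs₀.le, one_div_mul_eq_div]
  have hbound := norm_integral_smul_taylorRemainder_le (α := α) hφ hφ' hL hK hβ hβ'
    (Real.rpow_pos_of_pos hs₀ (-(1 / α))) ha ha₁ x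
  simp only [hscale, hpow, Real.one_rpow, mul_one, intervalIntegral.integral_of_le ha₁] at hbound
  refine hbound.trans (add_le_add_right (mul_le_mul_of_nonneg_left ?_
    ((norm_nonneg _).trans (hK 0))) _)
  refine setIntegral_mono_set hβint ?_ (Ioc_subset_Ioc_left ha.le).eventuallyLE
  filter_upwards [ae_restrict_mem measurableSet_Ioc] with l hl
  exact mul_nonneg (abs_nonneg _) (Real.rpow_nonneg hl.1.le _)

/-- Estimate of the middle integral `I₂` in the case `α ∈ (1,2)`. -/
theorem stmt_9 (α s : ℝ) (hα : α ∈ Set.Ioo (1:ℝ) 2) (hs : s ∈ Set.Ioc (0:ℝ) 1)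
    (φ : ℝ → ℝ) (hφ : ContDiff ℝ 2 φ)
    (hφb : ∃ M, ∀ x, |φ x| ≤ M) (hφ'b : ∃ M, ∀ x, |deriv φ x| ≤ M)
    (hφ''b : ∃ M, ∀ x, |deriv (deriv φ) x| ≤ M)
    (β β' : ℝ → ℝ)
    (hβd : ∀ y > (0:ℝ), HasDerivAt β (β' y) y)
    (hβ'c : ContinuousOn β' (Set.Ioi 0))
    (hβb : ∃ M, ∀ y > (0:ℝ), |β y| ≤ M) :
    ∀ x : ℝ,
      |∫ l in Set.Ioc (s ^ (1/α)) (1:ℝ),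
          (φ (x + l) - φ x - deriv φ x * l) *
            (α * β (s ^ (-(1/α)) * l) - β' (s ^ (-(1/α)) * l) * s ^ (-(1/α)) * l) *
            l ^ (-α - 1)| ≤
        (1/2) * (⨆ y, |deriv (deriv φ) y|) * |β 1| * s ^ ((2 - α) / α) +
          2 * (⨆ y, |deriv φ y|) * |β (s ^ (-(1/α)))| +
          (⨆ y, |deriv (deriv φ) y|) *
            ∫ l in Set.Ioc (0:ℝ) 1, |β (s ^ (-(1/α)) * l)| * l ^ (1 - α) := by
  have hβint := integrableOn_abs_comp_const_mul_mul_rpow hα.2 (HasDerivAt.continuousOn hβd) hβb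
    (Real.rpow_pos_of_pos hs.1 (-(1 / α))) 1
  simpa only [taylorRemainder, smul_eq_mul, Real.norm_eq_abs, mul_comm, mul_left_comm] using
    stmt_9_general (zero_lt_one.trans hα.1) hs (hφ.differentiable two_ne_zero)
      ((hφ.deriv' (n := 1)).differentiable one_ne_zero) hφ'b hφ''b hβd
      (hβ'c.locallyIntegrableOn measurableSet_Ioi) hβint
end
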